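/- arXiv:0906.1637 — 8 statements merged into one kernel-verified Lean document; each statement's English description precedes it below -/
import Mathlib

section
/- Let a > 1, Q ≥ 0 and 𝓘 > 0 be real parameters and let P(k,ω) be the scalar Linear/Gaussian/Bernoulli covariance process with arrival probability γ̄ ∈ (0,1) started at p₀ ≥ p∞. Then the sequence of expected values (E[P(k)])_{k∈ℕ} is bounded if and only if γ̄ > 1 − 1/a². -/
open MeasureTheory ProbabilityTheory

/-- Measurement-update map `g(p) = ((a²p + Q)⁻¹ + 𝓘)⁻¹`. -/
noncomputable def gMap (a Q I p : ℝ) : ℝ := ((a ^ 2 * p + Q)⁻¹ + I)⁻¹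

/-- Time-update map `h(p) = a²p + Q`. -/
def hMap (a Q p : ℝ) : ℝ := a ^ 2 * p + Q

/-- The scalar Linear/Gaussian/Bernoulli covariance process driven by the
arrival sequence `ω : ℕ → Bool`, started at `p₀`. -/
noncomputable def lgbProc (a Q I p₀ : ℝ) (ω : ℕ → Bool) : ℕ → ℝ
  | 0 => p₀
  | k + 1 =>
      if ω k then gMap a Q I (lgbProc a Q I p₀ ω k)
      else hMap a Q (lgbProc a Q I p₀ ω k)

lemma lgb_congr (a Q I p₀ : ℝ) (ω ω' : ℕ → Bool) (k : ℕ) (h : ∀ i < k, ω i = ω' i) :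
    lgbProc a Q I p₀ ω k = lgbProc a Q I p₀ ω' k := by
  induction k with
  | zero => rfl
  | succ k ih =>
    simp only [lgbProc]
    rw [ih (fun i hi => h i (by omega)), h k (by omega)]

lemma lgb_factor (a Q I p₀ : ℝ) (k : ℕ) (φ : ℝ → ENNReal) :
    ∃ Φ : ((Finset.range k) → Bool) → ENNReal, ∀ ω : ℕ → Bool,
      φ (lgbProc a Q I p₀ ω k) = Φ (fun i => ω i) := by
  refine ⟨fun x => φ (lgbProc a Q I p₀
    (fun i => if h : i ∈ Finset.range k then x ⟨i, h⟩ else false) k), fun ω => ?_⟩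
  congr 1
  apply lgb_congr
  intro i hi
  simp [hi]

lemma lgb_meas (a Q I p₀ : ℝ) (k : ℕ) (φ : ℝ → ENNReal) :
    Measurable (fun ω : ℕ → Bool => φ (lgbProc a Q I p₀ ω k)) := by
  obtain ⟨Φ, h⟩ := lgb_factor a Q I p₀ k φ
  simp only [h]
  exact (measurable_of_finite Φ).comp (measurable_pi_lambda _ fun i => measurable_pi_apply _)

lemma lgb_indep (a Q I p₀ : ℝ) (k : ℕ) (φ : ℝ → ENNReal) (ψ : Bool → ENNReal)
    (μ : Measure (ℕ → Bool))
    (hIndep : iIndepFun (fun (k : ℕ) (ω : ℕ → Bool) => ω k) μ) :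
    ∫⁻ ω, φ (lgbProc a Q I p₀ ω k) * ψ (ω k) ∂μ
      = (∫⁻ ω, φ (lgbProc a Q I p₀ ω k) ∂μ) * ∫⁻ ω, ψ (ω k) ∂μ := by
  have hψ : Measurable (fun ω : ℕ → Bool => ψ (ω k)) :=
    (measurable_of_finite ψ).comp (measurable_pi_apply k)
  refine lintegral_mul_eq_lintegral_mul_lintegral_of_indepFun (lgb_meas a Q I p₀ k φ) hψ ?_
  obtain ⟨Φ, h⟩ := lgb_factor a Q I p₀ k φ
  simp only [h]
  have := hIndep.indepFun_finset (Finset.range k) {k} (by simp)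
    (fun i => measurable_pi_apply i)
  exact this.comp (φ := Φ) (ψ := fun x : (({k} : Finset ℕ) → Bool) => ψ (x ⟨k, by simp⟩))
    (measurable_of_finite Φ) (measurable_of_finite _)

lemma lgb_step (a Q I p₀ γ : ℝ) (hγ : γ ∈ Set.Ioo (0 : ℝ) 1) (k : ℕ)
    (μ : Measure (ℕ → Bool)) [IsProbabilityMeasure μ]
    (hBern : ∀ k : ℕ, μ {ω : ℕ → Bool | ω k = true} = ENNReal.ofReal γ)
    (hIndep : iIndepFun (fun (k : ℕ) (ω : ℕ → Bool) => ω k) μ) :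
    ∫⁻ ω, ENNReal.ofReal (lgbProc a Q I p₀ ω (k + 1)) ∂μ
      = (∫⁻ ω, ENNReal.ofReal (gMap a Q I (lgbProc a Q I p₀ ω k)) ∂μ) * ENNReal.ofReal γ
        + (∫⁻ ω, ENNReal.ofReal (hMap a Q (lgbProc a Q I p₀ ω k)) ∂μ)
          * ENNReal.ofReal (1 - γ) := by
  have hm : MeasurableSet {ω : ℕ → Bool | ω k = true} :=
    (measurable_pi_apply (X := fun _ : ℕ => Bool) k) (measurableSet_singleton true)
  have h1 : ∫⁻ ω, (fun b : Bool => if b then (1 : ENNReal) else 0) (ω k) ∂μ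
      = ENNReal.ofReal γ := by
    rw [← hBern k, ← lintegral_indicator_one hm]
    refine lintegral_congr fun ω => ?_
    simp [Set.indicator]
  have h0 : ∫⁻ ω, (fun b : Bool => if b then (0 : ENNReal) else 1) (ω k) ∂μ
      = ENNReal.ofReal (1 - γ) := by
    rw [ENNReal.ofReal_sub _ hγ.1.le, ENNReal.ofReal_one, ← hBern k, ← prob_compl_eq_one_sub hm,
      ← lintegral_indicator_one hm.compl]
    refine lintegral_congr fun ω => ?_
    by_cases h : ω k = true <;> simp [Set.indicator, h]
  rw [← h1, ← h0, ← lgb_indep a Q I p₀ k (fun p => ENNReal.ofReal (gMap a Q I p))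
      (fun b : Bool => if b then (1 : ENNReal) else 0) μ hIndep,
    ← lgb_indep a Q I p₀ k (fun p => ENNReal.ofReal (hMap a Q p))
      (fun b : Bool => if b then (0 : ENNReal) else 1) μ hIndep,
    ← lintegral_add_left]
  · refine lintegral_congr fun ω => ?_
    by_cases h : ω k = true <;> simp [lgbProc, h]
  · exact (lgb_meas a Q I p₀ k (fun p => ENNReal.ofReal (gMap a Q I p))).mul
      ((measurable_of_finite (fun b : Bool => if b then (1 : ENNReal) else 0)).comp
        (measurable_pi_apply k))

lemma lgb_ge (a Q I pinf p₀ : ℝ)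
    (ha : 1 < a) (hQ : 0 ≤ Q) (hI : 0 < I)
    (hpinf : 0 < pinf) (hfix : gMap a Q I pinf = pinf) (p : ℝ) (hp : pinf ≤ p) :
    pinf ≤ gMap a Q I p ∧ pinf ≤ hMap a Q p := by
  have ha2 : 1 < a ^ 2 := by nlinarith
  constructor
  · rw [← hfix]
    rw [hfix]
    nth_rewrite 1 [← hfix]
    unfold gMap
    have : 0 < a ^ 2 * pinf + Q := by positivity
    have : 0 < p := by linarith
    have : 0 < a ^ 2 * p + Q := by positivity
    gcongr
  · unfold hMap
    nlinarith

lemma lgb_inv (a Q I pinf p₀ : ℝ)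
    (ha : 1 < a) (hQ : 0 ≤ Q) (hI : 0 < I)
    (hpinf : 0 < pinf) (hfix : gMap a Q I pinf = pinf) (hp₀ : pinf ≤ p₀)
    (ω : ℕ → Bool) (k : ℕ) : pinf ≤ lgbProc a Q I p₀ ω k := by
  induction k with
  | zero => exact hp₀
  | succ k ih =>
    have := lgb_ge a Q I pinf p₀ ha hQ hI hpinf hfix _ ih
    simp only [lgbProc]
    split_ifs
    exacts [this.1, this.2]

/-- For `a > 1`, `Q ≥ 0`, `𝓘 > 0`, the sequence of expected
values `(E[P(k)])ₖ` of the scalar LGB covariance process with Bernoulli(γ̄)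
arrivals, started at `p₀ ≥ p∞`, is bounded iff `γ̄ > 1 - 1/a²`. -/
theorem lgb_expected_covariance_bounded_iff
    (a Q I pinf p₀ γ : ℝ)
    (ha : 1 < a) (hQ : 0 ≤ Q) (hI : 0 < I)
    (hpinf : 0 < pinf) (hfix : gMap a Q I pinf = pinf) (hp₀ : pinf ≤ p₀)
    (hγ : γ ∈ Set.Ioo (0 : ℝ) 1)
    (μ : Measure (ℕ → Bool)) [IsProbabilityMeasure μ]
    (hBern : ∀ k : ℕ, μ {ω : ℕ → Bool | ω k = true} = ENNReal.ofReal γ)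
    (hIndep : iIndepFun
      (fun (k : ℕ) (ω : ℕ → Bool) => ω k) μ) :
    (∃ C : ℝ, ∀ k : ℕ,
        ∫⁻ ω, ENNReal.ofReal (lgbProc a Q I p₀ ω k) ∂μ ≤ ENNReal.ofReal C)
      ↔ 1 - 1 / a ^ 2 < γ := by
  have hinv := lgb_inv a Q I pinf p₀ ha hQ hI hpinf hfix hp₀
  have hstep := fun k => lgb_step a Q I p₀ γ hγ k μ hBern hIndep
  have ha2 : 1 < a ^ 2 := by nlinarith
  have hγ0 := hγ.1
  have hγ1 : 0 < 1 - γ := by linarith [hγ.2]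
  constructor
  · rintro ⟨C, hC⟩
    by_contra hcon
    have hb : 1 ≤ a ^ 2 * (1 - γ) := by
      have h1 : 1 / a ^ 2 ≤ 1 - γ := by linarith
      rw [div_le_iff₀ (by linarith)] at h1
      linarith
    have key : ∀ k : ℕ, ENNReal.ofReal (k * (γ * pinf)) ≤
        ∫⁻ ω, ENNReal.ofReal (lgbProc a Q I p₀ ω k) ∂μ := by
      intro k
      induction k with
      | zero => simp
      | succ k ih =>
        rw [hstep k]
        have e1 : ENNReal.ofReal pinf
            ≤ ∫⁻ ω, ENNReal.ofReal (gMap a Q I (lgbProc a Q I p₀ ω k)) ∂μ := by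
          calc ENNReal.ofReal pinf = ∫⁻ ω, ENNReal.ofReal pinf ∂μ := by simp
            _ ≤ _ := lintegral_mono fun ω => ENNReal.ofReal_le_ofReal
              (lgb_ge a Q I pinf p₀ ha hQ hI hpinf hfix _ (hinv ω k)).1
        have e2 : ENNReal.ofReal (a ^ 2) * ENNReal.ofReal (k * (γ * pinf))
            ≤ ∫⁻ ω, ENNReal.ofReal (hMap a Q (lgbProc a Q I p₀ ω k)) ∂μ := by
          refine (mul_le_mul_right ih _).trans ?_
          rw [← lintegral_const_mul _ (lgb_meas a Q I p₀ k ENNReal.ofReal)]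
          refine lintegral_mono fun ω => ?_
          rw [← ENNReal.ofReal_mul (by positivity)]
          refine ENNReal.ofReal_le_ofReal ?_
          unfold hMap
          linarith
        refine le_trans ?_ (add_le_add (mul_le_mul_left e1 _) (mul_le_mul_left e2 _))
        rw [← ENNReal.ofReal_mul (by positivity), ← ENNReal.ofReal_mul (by positivity),
          ← ENNReal.ofReal_mul (by positivity),
          ← ENNReal.ofReal_add (by positivity) (by positivity)]
        refine ENNReal.ofReal_le_ofReal ?_
        push_cast
        have : 0 ≤ (k : ℝ) * (γ * pinf) := by positivity
        nlinarith
    have hpos : 0 < γ * pinf := by positivity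
    obtain ⟨n, hn⟩ := exists_nat_gt (max C 0 / (γ * pinf))
    rw [div_lt_iff₀ hpos] at hn
    have h2 := (key n).trans (hC n)
    have h3 := (ENNReal.ofReal_lt_ofReal_iff_of_nonneg (le_max_right C 0)).2 hn
    exact absurd (h2.trans (ENNReal.ofReal_le_ofReal (le_max_left C 0))) (not_le.2 h3)
  · intro hlt
    have hb : a ^ 2 * (1 - γ) < 1 := by
      have h1 : 1 - γ < 1 / a ^ 2 := by linarith
      rw [lt_div_iff₀ (by linarith)] at h1
      linarith
    set D := (γ / I + (1 - γ) * Q) / (1 - a ^ 2 * (1 - γ)) with hD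
    have hp0 : 0 < p₀ := by linarith
    refine ⟨max p₀ D, fun k => ?_⟩
    set C := max p₀ D with hCdef
    have hC0 : 0 < C := lt_of_lt_of_le hp0 (le_max_left _ _)
    have hCD : γ / I + (1 - γ) * Q ≤ C * (1 - a ^ 2 * (1 - γ)) := by
      rw [← div_le_iff₀ (by linarith)]
      exact le_max_right _ _
    induction k with
    | zero => 
      simp only [lgbProc, lintegral_const, measure_univ, mul_one]
      exact ENNReal.ofReal_le_ofReal (le_max_left p₀ D)
    | succ k ih =>
      rw [hstep k]
      have e1 : ∫⁻ ω, ENNReal.ofReal (gMap a Q I (lgbProc a Q I p₀ ω k)) ∂μ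
          ≤ ENNReal.ofReal (I⁻¹) := by
        calc _ ≤ ∫⁻ ω, ENNReal.ofReal (I⁻¹) ∂μ := lintegral_mono fun ω => by
              refine ENNReal.ofReal_le_ofReal ?_
              unfold gMap
              have hp : 0 < lgbProc a Q I p₀ ω k := lt_of_lt_of_le hpinf (hinv ω k)
              have : 0 ≤ (a ^ 2 * lgbProc a Q I p₀ ω k + Q)⁻¹ := by positivity
              exact inv_anti₀ hI (by linarith)
          _ = _ := by simp
      have e2 : ∫⁻ ω, ENNReal.ofReal (hMap a Q (lgbProc a Q I p₀ ω k)) ∂μ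
          ≤ ENNReal.ofReal (a ^ 2) * ENNReal.ofReal C + ENNReal.ofReal Q := by
        calc _ = ∫⁻ ω, (ENNReal.ofReal (a ^ 2) * ENNReal.ofReal (lgbProc a Q I p₀ ω k)
                + ENNReal.ofReal Q) ∂μ := lintegral_congr fun ω => by
              have hp : 0 < lgbProc a Q I p₀ ω k := lt_of_lt_of_le hpinf (hinv ω k)
              rw [← ENNReal.ofReal_mul (by positivity),
                ← ENNReal.ofReal_add (by positivity) hQ, hMap]
          _ = ENNReal.ofReal (a ^ 2) * ∫⁻ ω, ENNReal.ofReal (lgbProc a Q I p₀ ω k) ∂μ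
                + ENNReal.ofReal Q := by
              rw [lintegral_add_right _ measurable_const,
                lintegral_const_mul _ (lgb_meas a Q I p₀ k ENNReal.ofReal)]
              simp
          _ ≤ _ := by gcongr
      refine le_trans (add_le_add (mul_le_mul_left e1 _) (mul_le_mul_left e2 _)) ?_
      rw [← ENNReal.ofReal_mul (by positivity), ← ENNReal.ofReal_mul (by positivity),
        ← ENNReal.ofReal_add (by positivity) hQ, ← ENNReal.ofReal_mul (by positivity),
        ← ENNReal.ofReal_add (by positivity) (by positivity)]
      refine ENNReal.ofReal_le_ofReal ?_
      rw [div_eq_mul_inv] at hCD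
      linarith
end

section
/- For every arrival sequence, the scalar 'optimist' system (which resets to W_opt = g(p∞) on every arrival), the exact system (which applies g on every arrival), and the 'pessimist' system (which resets to 𝓘⁻¹ on every arrival), all three applying h in the absence of arrivals and all three started at the same initial value p₀ ≥ p∞, satisfy P_opt(k) ≤ P(k) ≤ P_pess(k) for all k. -/
/-- For every arrival sequence `s`, the "optimist" system
(resetting to `g(p∞)` on arrivals), the exact system (applying `g` on
arrivals) and the "pessimist" system (resetting to `𝓘⁻¹` on arrivals), all
applying `h` in the absence of arrivals and all started at `p₀ ≥ p∞`, satisfy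
`P_opt(k) ≤ P(k) ≤ P_pess(k)` for all `k`. -/
theorem lgb_optimist_le_exact_le_pessimist
    (a Q I pinf p₀ : ℝ)
    (ha : 1 < a) (hQ : 0 ≤ Q) (hI : 0 < I)
    (hpinf : 0 < pinf) (hfix : gMap a Q I pinf = pinf) (hp₀ : pinf ≤ p₀)
    (s : ℕ → Bool)
    (Popt P Ppess : ℕ → ℝ)
    (hPopt0 : Popt 0 = p₀) (hP0 : P 0 = p₀) (hPpess0 : Ppess 0 = p₀)
    (hPopt : ∀ k, Popt (k + 1) =
      if s k then gMap a Q I pinf else hMap a Q (Popt k))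
    (hP : ∀ k, P (k + 1) =
      if s k then gMap a Q I (P k) else hMap a Q (P k))
    (hPpess : ∀ k, Ppess (k + 1) =
      if s k then I⁻¹ else hMap a Q (Ppess k)) :
    ∀ k, Popt k ≤ P k ∧ P k ≤ Ppess k := by
  have hg : ∀ p, pinf ≤ p → gMap a Q I pinf ≤ gMap a Q I p ∧ gMap a Q I p ≤ I⁻¹ := by
    intro p hp
    have h1 : 0 < a ^ 2 * pinf + Q := by positivity
    have h2 : a ^ 2 * pinf + Q ≤ a ^ 2 * p + Q := by gcongr
    have h3 : 0 < a ^ 2 * p + Q := lt_of_lt_of_le h1 h2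
    have h4 : 0 < (a ^ 2 * p + Q)⁻¹ := inv_pos.mpr h3
    have h5 : (a ^ 2 * p + Q)⁻¹ ≤ (a ^ 2 * pinf + Q)⁻¹ := inv_anti₀ h1 h2
    unfold gMap
    exact ⟨inv_anti₀ (by linarith) (by linarith), inv_anti₀ hI (by linarith)⟩
  have key : ∀ k, pinf ≤ P k ∧ Popt k ≤ P k ∧ P k ≤ Ppess k := by
    intro k
    induction k with
    | zero => rw [hPopt0, hP0, hPpess0]; exact ⟨hp₀, le_rfl, le_rfl⟩
    | succ k ih =>
      obtain ⟨i1, i2, i3⟩ := ih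
      rw [hPopt, hP, hPpess]
      by_cases hs : s k = true
      · simp only [hs, if_true]
        obtain ⟨g1, g2⟩ := hg _ i1
        exact ⟨by linarith, g1, g2⟩
      · simp only [hs]
        have ha2 : 1 ≤ a ^ 2 := by nlinarith
        unfold hMap
        refine ⟨?_, ?_, ?_⟩
        · simp only [Bool.false_eq_true, if_false]
          nlinarith
        · simp only [Bool.false_eq_true, if_false]
          gcongr
        · simp only [Bool.false_eq_true, if_false]
          gcongr
  exact fun k => (key k).2
end

section
/- Let a² > 1, W > 0, Q ≥ 0, γ̄ ∈ (0,1), and set f(j) = a^{2j}·W + Q·(a^{2j} − 1)/(a² − 1) for j ∈ ℕ. Then the series ∑_{j=0}^∞ γ̄·(1−γ̄)^j·f(j) converges if and only if a²·(1−γ̄) < 1, and in that case its sum equals γ̄·(W + Q/(a² − 1))/(1 − a²·(1−γ̄)) − Q/(a² − 1). -/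
/-- For `a² > 1`, `W > 0`, `Q ≥ 0`, `γ̄ ∈ (0,1)` and
`f(j) = a^{2j}·W + Q·(a^{2j} − 1)/(a² − 1)`, the series
`∑ⱼ γ̄·(1−γ̄)ʲ·f(j)` converges iff `a²·(1−γ̄) < 1`, in which case its sum is
`γ̄·(W + Q/(a² − 1))/(1 − a²·(1−γ̄)) − Q/(a² − 1)`. -/
theorem lgb_geometric_series_covariance
    (a W Q γ : ℝ) (ha : 1 < a ^ 2) (hW : 0 < W) (hQ : 0 ≤ Q)
    (hγ : γ ∈ Set.Ioo (0 : ℝ) 1) :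
    (Summable (fun j : ℕ =>
        γ * (1 - γ) ^ j * (a ^ (2 * j) * W + Q * (a ^ (2 * j) - 1) / (a ^ 2 - 1)))
      ↔ a ^ 2 * (1 - γ) < 1)
    ∧ (a ^ 2 * (1 - γ) < 1 →
        ∑' j : ℕ,
            γ * (1 - γ) ^ j * (a ^ (2 * j) * W + Q * (a ^ (2 * j) - 1) / (a ^ 2 - 1))
          = γ * (W + Q / (a ^ 2 - 1)) / (1 - a ^ 2 * (1 - γ)) - Q / (a ^ 2 - 1)) := by
  obtain ⟨h0, h1⟩ := hγ
  have hd : 0 < a ^ 2 - 1 := by linarith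
  have hfun : (fun j : ℕ =>
        γ * (1 - γ) ^ j * (a ^ (2 * j) * W + Q * (a ^ (2 * j) - 1) / (a ^ 2 - 1)))
      = fun j : ℕ => γ * (W + Q / (a ^ 2 - 1)) * (a ^ 2 * (1 - γ)) ^ j
          - γ * (Q / (a ^ 2 - 1)) * (1 - γ) ^ j := by
    funext j
    rw [mul_pow, pow_mul]
    ring
  have hr0 : 0 ≤ a ^ 2 * (1 - γ) := mul_nonneg (by linarith) (by linarith)
  have hc : γ * (W + Q / (a ^ 2 - 1)) ≠ 0 := by
    have : 0 ≤ Q / (a ^ 2 - 1) := div_nonneg hQ hd.le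
    have : 0 < W + Q / (a ^ 2 - 1) := by linarith
    exact (mul_pos h0 this).ne'
  have hg : HasSum (fun j : ℕ => γ * (Q / (a ^ 2 - 1)) * (1 - γ) ^ j)
      (γ * (Q / (a ^ 2 - 1)) * (1 - (1 - γ))⁻¹) :=
    (hasSum_geometric_of_lt_one (by linarith) (by linarith)).mul_left _
  have hs : a ^ 2 * (1 - γ) < 1 → HasSum (fun j : ℕ =>
        γ * (1 - γ) ^ j * (a ^ (2 * j) * W + Q * (a ^ (2 * j) - 1) / (a ^ 2 - 1)))
      (γ * (W + Q / (a ^ 2 - 1)) / (1 - a ^ 2 * (1 - γ)) - Q / (a ^ 2 - 1)) := by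
    intro h
    rw [hfun]
    have := ((hasSum_geometric_of_lt_one hr0 h).mul_left
      (γ * (W + Q / (a ^ 2 - 1)))).sub hg
    have e : γ * (Q / (a ^ 2 - 1)) * (1 - (1 - γ))⁻¹ = Q / (a ^ 2 - 1) := by
      rw [sub_sub_cancel]
      field_simp
    rw [e, ← div_eq_mul_inv (γ * (W + Q / (a ^ 2 - 1)))] at this
    exact this
  refine ⟨⟨fun h => ?_, fun h => (hs h).summable⟩, fun h => (hs h).tsum_eq⟩
  rw [hfun] at h
  have h2 := h.add hg.summable
  simp only [sub_add_cancel] at h2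
  rw [summable_mul_left_iff hc, summable_geometric_iff_norm_lt_one, Real.norm_eq_abs,
    abs_of_nonneg hr0] at h2
  exact h2
end

section
/- Let a² > 1, W > 0, Q ≥ 0, γ̄ ∈ (0,1), and set f(j) = a^{2j}·W + Q·(a^{2j} − 1)/(a² − 1) for j ∈ ℕ. Then the series ∑_{j=0}^∞ γ̄·(1−γ̄)^j·√(f(j)) converges if and only if |a|·(1−γ̄) < 1. -/
/-- For `a² > 1`, `W > 0`, `Q ≥ 0`, `γ̄ ∈ (0,1)` and
`f(j) = a^{2j}·W + Q·(a^{2j} − 1)/(a² − 1)`, the series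
`∑ⱼ γ̄·(1−γ̄)ʲ·√(f(j))` converges iff `|a|·(1−γ̄) < 1`. -/
theorem lgb_geometric_series_stddev
    (a W Q γ : ℝ) (ha : 1 < a ^ 2) (hW : 0 < W) (hQ : 0 ≤ Q)
    (hγ : γ ∈ Set.Ioo (0 : ℝ) 1) :
    Summable (fun j : ℕ =>
        γ * (1 - γ) ^ j *
          Real.sqrt (a ^ (2 * j) * W + Q * (a ^ (2 * j) - 1) / (a ^ 2 - 1)))
      ↔ |a| * (1 - γ) < 1 := by
  obtain ⟨h0, h1⟩ := hγ
  have hd : 0 < a ^ 2 - 1 := by linarith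
  have hg : 0 < 1 - γ := by linarith
  have hr : 0 ≤ |a| * (1 - γ) := by positivity
  have hpow : ∀ j : ℕ, a ^ (2 * j) = (|a| ^ j) ^ 2 := by
    intro j
    rw [pow_mul, ← sq_abs a, ← pow_mul, ← pow_mul, mul_comm]
  have hs : ∀ (j : ℕ) (C : ℝ), Real.sqrt (a ^ (2 * j) * C) = |a| ^ j * Real.sqrt C := by
    intro j C
    rw [hpow, Real.sqrt_mul (sq_nonneg _), Real.sqrt_sq (by positivity)]
  have hone : ∀ j : ℕ, 1 ≤ a ^ (2 * j) := by
    intro j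
    rw [pow_mul]
    exact one_le_pow₀ ha.le
  have hgeo : Summable (fun j : ℕ => (|a| * (1 - γ)) ^ j) ↔ |a| * (1 - γ) < 1 := by
    rw [summable_geometric_iff_norm_lt_one, Real.norm_of_nonneg hr]
  rw [← hgeo]
  constructor
  · intro h
    have hc : γ * Real.sqrt W ≠ 0 := (mul_pos h0 (Real.sqrt_pos.mpr hW)).ne'
    rw [← summable_mul_left_iff hc]
    refine Summable.of_nonneg_of_le (fun j => by positivity) (fun j => ?_) h
    have hle : |a| ^ j * Real.sqrt W ≤
        Real.sqrt (a ^ (2 * j) * W + Q * (a ^ (2 * j) - 1) / (a ^ 2 - 1)) := by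
      rw [← hs]
      apply Real.sqrt_le_sqrt
      have : 0 ≤ Q * (a ^ (2 * j) - 1) / (a ^ 2 - 1) :=
        div_nonneg (mul_nonneg hQ (by linarith [hone j])) hd.le
      linarith
    calc γ * Real.sqrt W * (|a| * (1 - γ)) ^ j
        = γ * (1 - γ) ^ j * (|a| ^ j * Real.sqrt W) := by rw [mul_pow]; ring
      _ ≤ _ := mul_le_mul_of_nonneg_left hle (by positivity)
  · intro h
    refine Summable.of_nonneg_of_le (fun j => by positivity) (fun j => ?_)
      (h.mul_left (γ * Real.sqrt (W + Q / (a ^ 2 - 1))))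
    have hle : Real.sqrt (a ^ (2 * j) * W + Q * (a ^ (2 * j) - 1) / (a ^ 2 - 1)) ≤
        |a| ^ j * Real.sqrt (W + Q / (a ^ 2 - 1)) := by
      rw [← hs]
      apply Real.sqrt_le_sqrt
      have h2 : 0 ≤ Q / (a ^ 2 - 1) := div_nonneg hQ hd.le
      have h3 : Q * (a ^ (2 * j) - 1) / (a ^ 2 - 1)
          = a ^ (2 * j) * (Q / (a ^ 2 - 1)) - Q / (a ^ 2 - 1) := by ring
      rw [h3, mul_add]
      linarith
    calc _ ≤ γ * (1 - γ) ^ j * (|a| ^ j * Real.sqrt (W + Q / (a ^ 2 - 1))) :=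
          mul_le_mul_of_nonneg_left hle (by positivity)
      _ = _ := by rw [mul_pow]; ring
end

section
/- The Riccati maps g and h are order preserving for the Löwner order and g is dominated by h: for real n×n positive definite symmetric matrices P₁ ≤ P₂ one has h(P₁) ≤ h(P₂) and g(P₁) ≤ g(P₂), and for every positive definite symmetric P one has g(P) ≤ h(P). -/
open Matrix

/-- Time-update Riccati map `h(P) = A P Aᵀ + Q`. -/
def riccatiH {n : ℕ} (A Q P : Matrix (Fin n) (Fin n) ℝ) :
    Matrix (Fin n) (Fin n) ℝ := A * P * Aᵀ + Q

/-- Measurement-update Riccati map `g(P) = ((A P Aᵀ + Q)⁻¹ + 𝓘)⁻¹`. -/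
noncomputable def riccatiG {n : ℕ} (A Q I P : Matrix (Fin n) (Fin n) ℝ) :
    Matrix (Fin n) (Fin n) ℝ := ((A * P * Aᵀ + Q)⁻¹ + I)⁻¹

lemma inv_anti_aux {n : ℕ} {X Y : Matrix (Fin n) (Fin n) ℝ} (hX : X.PosDef) (hY : Y.PosDef)
    (h : (Y - X).PosSemidef) : (X⁻¹ - Y⁻¹).PosSemidef := by
  have uX : IsUnit X.det := (Matrix.isUnit_iff_isUnit_det X).1 hX.isUnit
  have uY : IsUnit Y.det := (Matrix.isUnit_iff_isUnit_det Y).1 hY.isUnit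
  have e : X⁻¹ - Y⁻¹ = Y⁻¹ * (Y - X) * (Y⁻¹)ᴴ
      + Y⁻¹ * ((Y - X) * X⁻¹ * (Y - X)ᴴ) * (Y⁻¹)ᴴ := by
    rw [hY.inv.isHermitian.eq, h.isHermitian.eq]
    have a1 : Y⁻¹ * Y = 1 := Matrix.nonsing_inv_mul Y uY
    have a2 : Y * Y⁻¹ = 1 := Matrix.mul_nonsing_inv Y uY
    have b1 : X⁻¹ * X = 1 := Matrix.nonsing_inv_mul X uX
    have b2 : X * X⁻¹ = 1 := Matrix.mul_nonsing_inv X uX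
    have c1 : Y⁻¹ * (Y - X) = 1 - Y⁻¹ * X := by rw [mul_sub, a1]
    have c2 : (Y - X) * Y⁻¹ = 1 - X * Y⁻¹ := by rw [sub_mul, a2]
    have c3 : Y⁻¹ * ((Y - X) * X⁻¹ * (Y - X)) * Y⁻¹
        = (Y⁻¹ * (Y - X)) * X⁻¹ * ((Y - X) * Y⁻¹) := by simp only [mul_assoc]
    have c4 : (1 - Y⁻¹ * X) * X⁻¹ = X⁻¹ - Y⁻¹ := by
      rw [sub_mul, one_mul, mul_assoc, b2, mul_one]
    have c5 : X⁻¹ * (X * Y⁻¹) = Y⁻¹ := by rw [← mul_assoc, b1, one_mul]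
    rw [c3, c1, c2, c4, sub_mul, sub_mul, mul_sub, mul_sub, c5]
    simp only [mul_assoc, one_mul, mul_one]
    abel
  rw [e]
  exact (h.mul_mul_conjTranspose_same _).add
    ((hX.inv.posSemidef.mul_mul_conjTranspose_same _).mul_mul_conjTranspose_same _)

/-- The Riccati maps `g` and `h` are order preserving for the
Löwner order, and `g` is dominated by `h`. -/
theorem riccati_monotone_and_g_le_h
    {n : ℕ} (hn : 1 ≤ n) (A Q I : Matrix (Fin n) (Fin n) ℝ)
    (hA : IsUnit A.det) (hQ : Q.PosSemidef) (hI : I.PosSemidef) :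
    (∀ P₁ P₂ : Matrix (Fin n) (Fin n) ℝ, P₁.PosDef → P₂.PosDef →
        (P₂ - P₁).PosSemidef →
        (riccatiH A Q P₂ - riccatiH A Q P₁).PosSemidef ∧
        (riccatiG A Q I P₂ - riccatiG A Q I P₁).PosSemidef)
    ∧ (∀ P : Matrix (Fin n) (Fin n) ℝ, P.PosDef →
        (riccatiH A Q P - riccatiG A Q I P).PosSemidef) := by
  have hpos : ∀ P : Matrix (Fin n) (Fin n) ℝ, P.PosDef → (A * P * Aᵀ + Q).PosDef := by
    intro P hP
    have h1 : (A * P * Aᴴ).PosDef := hP.mul_mul_conjTranspose_same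
      (Matrix.vecMul_injective_of_isUnit ((Matrix.isUnit_iff_isUnit_det A).2 hA))
    rw [Matrix.conjTranspose_eq_transpose_of_trivial] at h1
    exact h1.add_posSemidef hQ
  refine ⟨fun P₁ P₂ h₁ h₂ h => ?_, fun P hP => ?_⟩
  · have hH : (A * P₂ * Aᵀ + Q - (A * P₁ * Aᵀ + Q)).PosSemidef := by
      have h3 := h.mul_mul_conjTranspose_same A
      rw [Matrix.conjTranspose_eq_transpose_of_trivial, mul_sub, sub_mul] at h3
      rwa [add_sub_add_right_eq_sub]
    refine ⟨hH, ?_⟩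
    have h4 := inv_anti_aux (hpos _ h₁) (hpos _ h₂) hH
    refine inv_anti_aux ((hpos _ h₂).inv.add_posSemidef hI)
      ((hpos _ h₁).inv.add_posSemidef hI) ?_
    rwa [add_sub_add_right_eq_sub]
  · have hp := hpos P hP
    have h5 := inv_anti_aux hp.inv (hp.inv.add_posSemidef hI) (by rwa [add_sub_cancel_left])
    rwa [Matrix.nonsing_inv_nonsing_inv _
      ((Matrix.isUnit_iff_isUnit_det _).1 hp.isUnit)] at h5
end

section
/- For the natural (Fisher/affine-invariant) distance d on positive definite matrices: if P₁, P₂, P₃ are real n×n positive definite symmetric matrices with P₁ ≤ P₂ ≤ P₃ in the Löwner order, then d(P₁,P₂) ≤ d(P₁,P₃). -/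
open Matrix

noncomputable def matEigs {n : ℕ} (M : Matrix (Fin n) (Fin n) ℝ) : Fin n → ℝ := by
  classical exact if h : M.IsHermitian then h.eigenvalues else 0

/-- The positive semidefinite square root, as in the older Mathlib (it is gone from the present one). -/
noncomputable def Matrix.PosSemidef.sqrt {n : Type*} [Fintype n] [DecidableEq n]
    {A : Matrix n n ℝ} (hA : A.PosSemidef) : Matrix n n ℝ :=
  hA.1.eigenvectorUnitary.1 * diagonal (Real.sqrt ∘ hA.1.eigenvalues) *
    (star hA.1.eigenvectorUnitary : Matrix n n ℝ)

noncomputable def matSqrt {n : ℕ} (M : Matrix (Fin n) (Fin n) ℝ) :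
    Matrix (Fin n) (Fin n) ℝ := by
  classical exact if h : M.PosSemidef then h.sqrt else 0

/-- The natural (Fisher / affine-invariant) distance on positive definite
matrices: `d(P₁,P₂) = (∑ᵢ (log λᵢ)²)^{1/2}` where `λᵢ` are the eigenvalues of
`P₂^{-1/2} P₁ P₂^{-1/2}`. -/
noncomputable def natDist {n : ℕ} (P₁ P₂ : Matrix (Fin n) (Fin n) ℝ) : ℝ :=
  Real.sqrt (∑ i : Fin n,
    Real.log (matEigs ((matSqrt P₂)⁻¹ * P₁ * (matSqrt P₂)⁻¹) i) ^ 2)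


lemma aux_sqrt {n : ℕ} {P : Matrix (Fin n) (Fin n) ℝ} (h : P.PosDef) :
    (matSqrt P)ᵀ = matSqrt P ∧ matSqrt P * matSqrt P = P := by
  have hs := h.posSemidef
  have e : matSqrt P = hs.sqrt := by simp [matSqrt, hs]
  rw [e]
  unfold Matrix.PosSemidef.sqrt
  set U := hs.1.eigenvectorUnitary with hU
  have hUU : (star U : Matrix (Fin n) (Fin n) ℝ) * U.1 = 1 := by
    exact Unitary.coe_star_mul_self U
  have hsp := hs.1.spectral_theorem
  rw [Unitary.conjStarAlgAut_apply] at hsp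
  constructor
  · have : (star U : Matrix (Fin n) (Fin n) ℝ) = U.1ᵀ := by
      rw [star_eq_conjTranspose, conjTranspose_eq_transpose_of_trivial]
    rw [this]
    simp [Matrix.transpose_mul, Matrix.mul_assoc]
  · conv_rhs => rw [hsp]
    have : (diagonal (Real.sqrt ∘ hs.1.eigenvalues)) * (diagonal (Real.sqrt ∘ hs.1.eigenvalues))
        = diagonal (RCLike.ofReal ∘ hs.1.eigenvalues : Fin n → ℝ) := by
      rw [diagonal_mul_diagonal]
      congr 1
      funext i
      simp [Real.mul_self_sqrt (hs.eigenvalues_nonneg i)]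
    rw [← this]
    simp only [Matrix.mul_assoc]
    rw [← Matrix.mul_assoc (star U : Matrix (Fin n) (Fin n) ℝ) U.1, hUU, Matrix.one_mul]

lemma aux_factor {n : ℕ} {P₁ P : Matrix (Fin n) (Fin n) ℝ} (h₁ : P₁.PosDef) (h : P.PosDef) :
    ∃ (C : Matrix (Fin n) (Fin n) ℝ) (d : Fin n → ℝ),
      matEigs ((matSqrt P)⁻¹ * P₁ * (matSqrt P)⁻¹) = d ∧ (∀ i, 0 < d i) ∧
      Antitone (d ∘ (Fintype.equivOfCardEq (Fintype.card_fin _) :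
        Fin (Fintype.card (Fin n)) ≃ Fin n)) ∧
      Cᵀ * C = P ∧ Cᵀ * diagonal d * C = P₁ := by
  obtain ⟨hT, hQ⟩ := aux_sqrt h
  set Q := matSqrt P
  have hdet : IsUnit Q.det := by
    have := h.det_pos
    rw [← hQ, det_mul] at this
    exact isUnit_iff_ne_zero.2 (by rintro h0; simp [h0] at this)
  have hTi : (Q⁻¹)ᵀ = Q⁻¹ := by rw [transpose_nonsing_inv, hT]
  have hA : (Q⁻¹ * P₁ * Q⁻¹).PosDef := by
    have := h₁.conjTranspose_mul_mul_same (B := Q⁻¹)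
      (Matrix.mulVec_injective_of_isUnit ((Matrix.isUnit_nonsing_inv_iff).2
        ((Matrix.isUnit_iff_isUnit_det _).2 hdet)))
    rwa [conjTranspose_eq_transpose_of_trivial, hTi] at this
  have hH := hA.isHermitian
  have hsp := hH.spectral_theorem
  rw [Unitary.conjStarAlgAut_apply] at hsp
  set U := hH.eigenvectorUnitary with hU
  have hUU : U.1 * (star U : Matrix (Fin n) (Fin n) ℝ) = 1 := by
    exact Unitary.coe_mul_star_self U
  have hst : (star U : Matrix (Fin n) (Fin n) ℝ) = U.1ᵀ := by
    rw [star_eq_conjTranspose, conjTranspose_eq_transpose_of_trivial]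
  rw [hst] at hsp hUU
  refine ⟨U.1ᵀ * Q, hH.eigenvalues, by rw [matEigs]; exact dif_pos hH, hA.eigenvalues_pos, ?_, ?_, ?_⟩
  · intro a b hab
    have := hH.eigenvalues₀_antitone hab
    simpa [IsHermitian.eigenvalues] using this
  · rw [transpose_mul, transpose_transpose, hT, Matrix.mul_assoc, ← Matrix.mul_assoc U.1, hUU,
      Matrix.one_mul, hQ]
  · have e : (RCLike.ofReal ∘ hH.eigenvalues : Fin n → ℝ) = hH.eigenvalues := by
      funext i; simp
    rw [e] at hsp
    rw [transpose_mul, transpose_transpose, hT]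
    calc Q * U.1 * diagonal hH.eigenvalues * (U.1ᵀ * Q)
        = Q * (U.1 * diagonal hH.eigenvalues * U.1ᵀ) * Q := by simp only [Matrix.mul_assoc]
      _ = Q * (Q⁻¹ * P₁ * Q⁻¹) * Q := by rw [← hsp]
      _ = (Q * Q⁻¹) * P₁ * (Q⁻¹ * Q) := by simp only [Matrix.mul_assoc]
      _ = P₁ := by rw [mul_nonsing_inv _ hdet, nonsing_inv_mul _ hdet]; simp

lemma aux_quad {n : ℕ} (C : Matrix (Fin n) (Fin n) ℝ) (d x : Fin n → ℝ) :
    x ⬝ᵥ ((Cᵀ * diagonal d * C) *ᵥ x) = ∑ j, d j * ((C *ᵥ x) j) ^ 2 := by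
  rw [Matrix.mul_assoc, ← Matrix.mulVec_mulVec, Matrix.dotProduct_mulVec, vecMul_transpose,
    ← Matrix.mulVec_mulVec]
  simp only [dotProduct, mulVec_diagonal]
  exact Finset.sum_congr rfl fun j _ => by ring

lemma aux_quad1 {n : ℕ} (C : Matrix (Fin n) (Fin n) ℝ) (x : Fin n → ℝ) :
    x ⬝ᵥ ((Cᵀ * C) *ᵥ x) = ∑ j, ((C *ᵥ x) j) ^ 2 := by
  have := aux_quad C (fun _ => 1) x
  simpa using this

lemma aux_vec {n : ℕ} (i : Fin n) (R : Fin n → Fin n → ℝ) :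
    ∃ x : Fin n → ℝ, x ≠ 0 ∧ ∀ j, j ≠ i → R j ⬝ᵥ x = 0 := by
  classical
  have hd : (Matrix.of (fun j => if j = i then 0 else R j)).det = 0 :=
    det_eq_zero_of_row_eq_zero i (fun k => by simp)
  obtain ⟨x, hx, h⟩ := exists_mulVec_eq_zero_iff.2 hd
  refine ⟨x, hx, fun j hj => ?_⟩
  have := congrFun h j
  simpa [mulVec, hj] using this

lemma aux_pos {n : ℕ} {P : Matrix (Fin n) (Fin n) ℝ} (h : P.PosDef) {x : Fin n → ℝ} (hx : x ≠ 0) :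
    0 < x ⬝ᵥ (P *ᵥ x) := by
  simpa using h.dotProduct_mulVec_pos hx

lemma aux_le {n : ℕ} {P P' : Matrix (Fin n) (Fin n) ℝ} (h : (P' - P).PosSemidef) (x : Fin n → ℝ) :
    x ⬝ᵥ (P *ᵥ x) ≤ x ⬝ᵥ (P' *ᵥ x) := by
  have := h.dotProduct_mulVec_nonneg x
  simp only [star_trivial, sub_mulVec, dotProduct_sub] at this
  linarith

theorem natDist_mono_of_loewner
    {n : ℕ} (P₁ P₂ P₃ : Matrix (Fin n) (Fin n) ℝ)
    (h₁ : P₁.PosDef) (h₂ : P₂.PosDef) (h₃ : P₃.PosDef)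
    (h₁₂ : (P₂ - P₁).PosSemidef) (h₂₃ : (P₃ - P₂).PosSemidef) :
    natDist P₁ P₂ ≤ natDist P₁ P₃ := by
  obtain ⟨C, d, hd, dpos, danti, hC, hCd⟩ := aux_factor h₁ h₂
  obtain ⟨B, f, hf, fpos, fanti, hB, hBf⟩ := aux_factor h₁ h₃
  unfold natDist
  rw [hd, hf]
  apply Real.sqrt_le_sqrt
  refine Finset.sum_le_sum fun i _ => ?_
  have hle1 : d i ≤ 1 := by
    obtain ⟨x, hx, hz⟩ := aux_vec i C
    have hz' : ∀ j, j ≠ i → (C *ᵥ x) j = 0 := hz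
    have q2 := aux_quad1 C x
    have q1 := aux_quad C d x
    rw [hC] at q2
    rw [hCd] at q1
    have p2 := aux_pos h₂ hx
    have l := aux_le h₁₂ x
    rw [Finset.sum_eq_single i (fun j _ hj => by simp [hz' j hj]) (by simp)] at q1 q2
    rw [q2] at p2
    rw [q1, q2] at l
    by_contra hc
    nlinarith
  have hfd : f i ≤ d i := by
    set e : Fin (Fintype.card (Fin n)) ≃ Fin n := Fintype.equivOfCardEq (Fintype.card_fin _)
    have da : ∀ a b, e.symm a ≤ e.symm b → d b ≤ d a := fun a b hab => by
      simpa using danti hab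
    have fa : ∀ a b, e.symm a ≤ e.symm b → f b ≤ f a := fun a b hab => by
      simpa using fanti hab
    obtain ⟨x, hx, hz⟩ := aux_vec i (fun j => if e.symm i < e.symm j then B j else C j)
    have q2 := aux_quad1 C x
    have q1 := aux_quad C d x
    have r3 := aux_quad1 B x
    have r1 := aux_quad B f x
    rw [hC] at q2
    rw [hCd] at q1
    rw [hB] at r3
    rw [hBf] at r1
    have p2 := aux_pos h₂ hx
    have l := aux_le h₂₃ x
    have k1 : x ⬝ᵥ (P₁ *ᵥ x) ≤ d i * (x ⬝ᵥ (P₂ *ᵥ x)) := by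
      rw [q1, q2, Finset.mul_sum]
      refine Finset.sum_le_sum fun j _ => ?_
      by_cases hj : e.symm i ≤ e.symm j
      · exact mul_le_mul_of_nonneg_right (da _ _ hj) (sq_nonneg _)
      · have hji : j ≠ i := by rintro rfl; exact hj le_rfl
        have h0 := hz j hji
        rw [if_neg (fun h => hj h.le)] at h0
        have h0' : (C *ᵥ x) j = 0 := h0
        simp [h0']
    have k2 : f i * (x ⬝ᵥ (P₃ *ᵥ x)) ≤ x ⬝ᵥ (P₁ *ᵥ x) := by
      rw [r1, r3, Finset.mul_sum]
      refine Finset.sum_le_sum fun j _ => ?_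
      by_cases hj : e.symm i < e.symm j
      · have hji : j ≠ i := by rintro rfl; exact lt_irrefl _ hj
        have h0 := hz j hji
        rw [if_pos hj] at h0
        have h0' : (B *ᵥ x) j = 0 := h0
        simp [h0']
      · exact mul_le_mul_of_nonneg_right (fa _ _ (not_lt.1 hj)) (sq_nonneg _)
    have k3 := mul_le_mul_of_nonneg_left l (fpos i).le
    exact le_of_mul_le_mul_right (k3.trans (k2.trans k1)) p2
  have a1 := Real.log_le_log (fpos i) hfd
  have a2 := Real.log_nonpos (dpos i).le hle1
  nlinarith
end

section
/- The time-update map h is nonexpansive for the natural (Fisher/affine-invariant) distance: for every invertible real n×n matrix A, every real n×n positive semidefinite symmetric matrix Q, and all real n×n positive definite symmetric matrices P₁, P₂, one has d(A P₁ Aᵀ + Q, A P₂ Aᵀ + Q) ≤ d(P₁, P₂). -/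
open Matrix

lemma quad_spec {n : ℕ} {M : Matrix (Fin n) (Fin n) ℝ} (hM : M.IsHermitian) (y : Fin n → ℝ) :
    y ⬝ᵥ (M *ᵥ y) = ∑ j, hM.eigenvalues j *
      (((hM.eigenvectorUnitary : Matrix (Fin n) (Fin n) ℝ)ᵀ *ᵥ y) j) ^ 2 := by
  have h := hM.spectral_theorem
  rw [Unitary.conjStarAlgAut_apply] at h
  set U : Matrix (Fin n) (Fin n) ℝ := (hM.eigenvectorUnitary : Matrix (Fin n) (Fin n) ℝ) with hU
  have h2 : M = U * diagonal hM.eigenvalues * Uᵀ := by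
    conv_lhs => rw [h]
    simp [Matrix.star_eq_conjTranspose, Function.comp_def]
  conv_lhs => rw [h2]
  rw [← Matrix.mulVec_mulVec, ← Matrix.mulVec_mulVec, Matrix.dotProduct_mulVec,
    ← Matrix.mulVec_transpose]
  simp only [dotProduct, Matrix.mulVec_diagonal]
  refine Finset.sum_congr rfl fun j _ => ?_
  ring

lemma norm_spec {n : ℕ} {M : Matrix (Fin n) (Fin n) ℝ} (hM : M.IsHermitian) (y : Fin n → ℝ) :
    y ⬝ᵥ y = ∑ j,
      (((hM.eigenvectorUnitary : Matrix (Fin n) (Fin n) ℝ)ᵀ *ᵥ y) j) ^ 2 := by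
  have h := Unitary.coe_mul_star_self hM.eigenvectorUnitary
  set U : Matrix (Fin n) (Fin n) ℝ := (hM.eigenvectorUnitary : Matrix (Fin n) (Fin n) ℝ) with hU
  have h2 : U * Uᵀ = 1 := by
    simpa [Matrix.star_eq_conjTranspose] using h
  have : y ⬝ᵥ y = y ⬝ᵥ ((U * Uᵀ) *ᵥ y) := by rw [h2, Matrix.one_mulVec]
  rw [this, ← Matrix.mulVec_mulVec, Matrix.dotProduct_mulVec, ← Matrix.mulVec_transpose]
  simp only [dotProduct]
  refine Finset.sum_congr rfl fun j _ => ?_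
  ring

lemma quad_conj {n : ℕ} (M B : Matrix (Fin n) (Fin n) ℝ) (z : Fin n → ℝ) :
    z ⬝ᵥ ((Bᵀ * M * B) *ᵥ z) = (B *ᵥ z) ⬝ᵥ (M *ᵥ (B *ᵥ z)) := by
  rw [← Matrix.mulVec_mulVec, ← Matrix.mulVec_mulVec, Matrix.dotProduct_mulVec,
    ← Matrix.mulVec_transpose, Matrix.transpose_transpose]

lemma key_cf {n : ℕ} {M N : Matrix (Fin n) (Fin n) ℝ} (B C : Matrix (Fin n) (Fin n) ℝ)
    (hM : M.IsHermitian) (hN : N.IsHermitian) (k : Fin n) :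
    ∃ z : Fin n → ℝ, z ≠ 0 ∧
      hM.eigenvalues k * (z ⬝ᵥ ((Bᵀ * B) *ᵥ z)) ≤ z ⬝ᵥ ((Bᵀ * M * B) *ᵥ z) ∧
      z ⬝ᵥ ((Cᵀ * N * C) *ᵥ z) ≤ hN.eigenvalues k * (z ⬝ᵥ ((Cᵀ * C) *ᵥ z)) := by
  classical
  let e : Fin (Fintype.card (Fin n)) ≃ Fin n := Fintype.equivOfCardEq (Fintype.card_fin _)
  have eM : ∀ i, hM.eigenvalues i = hM.eigenvalues₀ (e.symm i) := fun i => rfl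
  have eN : ∀ i, hN.eigenvalues i = hN.eigenvalues₀ (e.symm i) := fun i => rfl
  set U : Matrix (Fin n) (Fin n) ℝ := (hM.eigenvectorUnitary : Matrix (Fin n) (Fin n) ℝ) with hU
  set V : Matrix (Fin n) (Fin n) ℝ := (hN.eigenvectorUnitary : Matrix (Fin n) (Fin n) ℝ) with hV
  let K : Matrix (Fin n) (Fin n) ℝ := fun j =>
    if e.symm k < e.symm j then (Uᵀ * B) j else if e.symm j < e.symm k then (Vᵀ * C) j else 0
  have hdet : K.det = 0 := Matrix.det_eq_zero_of_row_eq_zero k (by intro j; simp [K])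
  obtain ⟨z, hz, hKz⟩ := Matrix.exists_mulVec_eq_zero_iff.mpr hdet
  have c1 : ∀ j, e.symm k < e.symm j → (Uᵀ *ᵥ (B *ᵥ z)) j = 0 := by
    intro j hj
    have := congrFun hKz j
    rw [Matrix.mulVec_mulVec]
    simpa [Matrix.mulVec, K, hj] using this
  have c2 : ∀ j, e.symm j < e.symm k → (Vᵀ *ᵥ (C *ᵥ z)) j = 0 := by
    intro j hj
    have := congrFun hKz j
    rw [Matrix.mulVec_mulVec]
    simpa [Matrix.mulVec, K, hj, not_lt.mpr hj.le] using this
  have b1 := quad_conj 1 B z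
  have b2 := quad_conj 1 C z
  rw [Matrix.mul_one, Matrix.one_mulVec] at b1 b2
  refine ⟨z, hz, ?_, ?_⟩
  · rw [b1, quad_conj, quad_spec hM, norm_spec hM, Finset.mul_sum]
    refine Finset.sum_le_sum fun j _ => ?_
    rcases lt_or_ge (e.symm k) (e.symm j) with h | h
    · rw [c1 j h]; simp
    · exact mul_le_mul_of_nonneg_right (by rw [eM, eM]; exact hM.eigenvalues₀_antitone h)
        (sq_nonneg _)
  · rw [b2, quad_conj, quad_spec hN, norm_spec hN, Finset.mul_sum]
    refine Finset.sum_le_sum fun j _ => ?_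
    rcases lt_or_ge (e.symm j) (e.symm k) with h | h
    · rw [c2 j h]; simp
    · exact mul_le_mul_of_nonneg_right (by rw [eN, eN]; exact hN.eigenvalues₀_antitone h)
        (sq_nonneg _)

lemma matSqrt_spec {n : ℕ} {P : Matrix (Fin n) (Fin n) ℝ} (hP : P.PosDef) :
    (matSqrt P)ᵀ = matSqrt P ∧ matSqrt P * matSqrt P = P ∧ IsUnit (matSqrt P).det := by
  have hps := hP.posSemidef
  have e0 : matSqrt P = hps.sqrt := by simp [matSqrt, hps]
  have h := hps.1.spectral_theorem
  rw [Unitary.conjStarAlgAut_apply] at h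
  have hu := Unitary.coe_star_mul_self hps.1.eigenvectorUnitary
  rw [e0]
  unfold Matrix.PosSemidef.sqrt
  set U : Matrix (Fin n) (Fin n) ℝ := (hps.1.eigenvectorUnitary : Matrix (Fin n) (Fin n) ℝ) with hU
  have hsq : (U * diagonal (Real.sqrt ∘ hps.1.eigenvalues) * star U) *
      (U * diagonal (Real.sqrt ∘ hps.1.eigenvalues) * star U) = P := by
    calc _ = U * diagonal (Real.sqrt ∘ hps.1.eigenvalues) * (star U * U) *
        diagonal (Real.sqrt ∘ hps.1.eigenvalues) * star U := by
          simp only [Matrix.mul_assoc]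
      _ = U * (diagonal (Real.sqrt ∘ hps.1.eigenvalues) *
        diagonal (Real.sqrt ∘ hps.1.eigenvalues)) * star U := by
          rw [hu, Matrix.mul_one]; simp only [Matrix.mul_assoc]
      _ = P := by
          conv_rhs => rw [h]
          rw [Matrix.diagonal_mul_diagonal]
          congr 3
          funext i
          simp [Real.mul_self_sqrt (hps.eigenvalues_nonneg i)]
  refine ⟨?_, hsq, ?_⟩
  · simp [Matrix.star_eq_conjTranspose, Matrix.mul_assoc]
  · have hd := hP.det_pos
    rw [isUnit_iff_ne_zero]
    intro h0
    rw [← hsq, Matrix.det_mul] at hd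
    rw [h0] at hd
    simp at hd

lemma whiten_posDef {n : ℕ} {P S : Matrix (Fin n) (Fin n) ℝ} (hP : P.PosDef)
    (hS : Sᵀ = S) (hd : IsUnit S.det) : (S⁻¹ * P * S⁻¹).PosDef := by
  have hSi : IsUnit S⁻¹ := by
    rw [Matrix.isUnit_nonsing_inv_iff]; exact (Matrix.isUnit_iff_isUnit_det S).2 hd
  have := (Matrix.IsUnit.posDef_star_left_conjugate_iff (x := P) hSi).2 hP
  have e : star S⁻¹ = S⁻¹ := by
    rw [Matrix.star_eq_conjTranspose, Matrix.conjTranspose_eq_transpose_of_trivial,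
      Matrix.transpose_nonsing_inv, hS]
  rwa [e] at this

lemma abs_log_le {l m : ℝ} (hl : 0 < l) (hm : 0 < m) (h1 : min 1 l ≤ m) (h2 : m ≤ max 1 l) :
    Real.log m ^ 2 ≤ Real.log l ^ 2 := by
  rcases le_total 1 l with h | h
  · rw [min_eq_left h] at h1
    rw [max_eq_right h] at h2
    exact pow_le_pow_left₀ (Real.log_nonneg h1) (Real.log_le_log hm h2) 2
  · rw [min_eq_right h] at h1
    rw [max_eq_left h] at h2
    have a := Real.log_nonpos hm.le h2
    have b := Real.log_le_log hl h1
    nlinarith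

/-- The time-update map `h(P) = A P Aᵀ + Q` is nonexpansive
for the natural (Fisher / affine-invariant) distance. -/
theorem riccatiH_nonexpansive
    {n : ℕ} (A Q : Matrix (Fin n) (Fin n) ℝ)
    (hA : IsUnit A.det) (hQ : Q.PosSemidef)
    (P₁ P₂ : Matrix (Fin n) (Fin n) ℝ) (h₁ : P₁.PosDef) (h₂ : P₂.PosDef) :
    natDist (A * P₁ * Aᵀ + Q) (A * P₂ * Aᵀ + Q) ≤ natDist P₁ P₂ := by
  have hAu : IsUnit A := (Matrix.isUnit_iff_isUnit_det A).2 hA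
  have conj : ∀ P : Matrix (Fin n) (Fin n) ℝ, P.PosDef → (A * P * Aᵀ).PosDef := by
    intro P hP
    have := (Matrix.IsUnit.posDef_star_right_conjugate_iff (x := P) hAu).2 hP
    rwa [Matrix.star_eq_conjTranspose, Matrix.conjTranspose_eq_transpose_of_trivial] at this
  have g₁ := conj P₁ h₁
  have g₂ := conj P₂ h₂
  have k₁ := g₁.add_posSemidef hQ
  have k₂ := g₂.add_posSemidef hQ
  obtain ⟨hS, hSS, hSd⟩ := matSqrt_spec h₂
  obtain ⟨hT, hTT, hTd⟩ := matSqrt_spec k₂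
  unfold natDist
  set S := matSqrt P₂
  set T := matSqrt (A * P₂ * Aᵀ + Q)
  have hM := whiten_posDef h₁ hS hSd
  have hN := whiten_posDef k₁ hT hTd
  have cB1 : (S * Aᵀ)ᵀ * (S * Aᵀ) = A * P₂ * Aᵀ := by
    rw [← hSS]; simp [Matrix.transpose_mul, hS, Matrix.mul_assoc]
  have cB2 : (S * Aᵀ)ᵀ * (S⁻¹ * P₁ * S⁻¹) * (S * Aᵀ) = A * P₁ * Aᵀ := by
    simp only [Matrix.transpose_mul, hS, Matrix.mul_assoc, Matrix.transpose_transpose,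
      Matrix.mul_nonsing_inv_cancel_left _ _ hSd, Matrix.nonsing_inv_mul_cancel_left _ _ hSd]
  have cC1 : Tᵀ * T = A * P₂ * Aᵀ + Q := by rw [hT, hTT]
  have cC2 : Tᵀ * (T⁻¹ * (A * P₁ * Aᵀ + Q) * T⁻¹) * T = A * P₁ * Aᵀ + Q := by
    rw [hT]
    generalize A * P₁ * Aᵀ + Q = X
    simp only [Matrix.mul_assoc, Matrix.nonsing_inv_mul _ hTd, Matrix.mul_one,
      Matrix.mul_nonsing_inv_cancel_left _ _ hTd]
  apply Real.sqrt_le_sqrt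
  refine Finset.sum_le_sum fun k _ => ?_
  have eM : matEigs (S⁻¹ * P₁ * S⁻¹) = hM.1.eigenvalues := by
    unfold matEigs; exact dif_pos hM.1
  have eN : matEigs (T⁻¹ * (A * P₁ * Aᵀ + Q) * T⁻¹) = hN.1.eigenvalues := by
    unfold matEigs; exact dif_pos hN.1
  rw [eM, eN]
  have pl := hM.eigenvalues_pos k
  have pm := hN.eigenvalues_pos k
  obtain ⟨z, hz, z1, z2⟩ := key_cf (S * Aᵀ) T hM.1 hN.1 k
  obtain ⟨w, hw, w1, w2⟩ := key_cf T (S * Aᵀ) hN.1 hM.1 k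
  rw [cB1, cB2] at z1 w2
  rw [cC1, cC2, Matrix.add_mulVec, Matrix.add_mulVec, dotProduct_add, dotProduct_add] at z2 w1
  have qz : 0 ≤ z ⬝ᵥ (Q *ᵥ z) := by simpa using hQ.dotProduct_mulVec_nonneg z
  have qw : 0 ≤ w ⬝ᵥ (Q *ᵥ w) := by simpa using hQ.dotProduct_mulVec_nonneg w
  have bz : 0 < z ⬝ᵥ ((A * P₂ * Aᵀ) *ᵥ z) := by simpa using g₂.dotProduct_mulVec_pos hz
  have bw : 0 < w ⬝ᵥ ((A * P₂ * Aᵀ) *ᵥ w) := by simpa using g₂.dotProduct_mulVec_pos hw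
  generalize hM.1.eigenvalues k = l at *
  generalize hN.1.eigenvalues k = m at *
  refine abs_log_le pl pm ?_ ?_
  · have a1 := mul_le_mul_of_nonneg_right (min_le_right 1 l) bz.le
    have a2 := mul_le_mul_of_nonneg_right (min_le_left 1 l) qz
    refine le_of_mul_le_mul_right ?_ (add_pos_of_pos_of_nonneg bz qz)
    linarith
  · have a1 := mul_le_mul_of_nonneg_right (le_max_right 1 l) bw.le
    have a2 := mul_le_mul_of_nonneg_right (le_max_left 1 l) qw
    refine le_of_mul_le_mul_right ?_ (add_pos_of_pos_of_nonneg bw qw)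
    linarith
end

section
/- Barnsley–Elton theorem (averaged contractivity): let (X,d) be a complete separable metric space, and let f₁,…,f_N : X → X be Lipschitz maps with Lipschitz constants s₁,…,s_N > 0 and probabilities p₁,…,p_N > 0 with ∑ᵢ pᵢ = 1 satisfying the average contractivity condition ∑ᵢ pᵢ·log(sᵢ) < 0. Define the Markov operator T on Borel probability measures on X by T(ν) = ∑ᵢ pᵢ·(fᵢ)_*ν (pushforward). Then there exists a unique Borel probability measure μ on X with T(μ) = μ, and this μ is attractive: for every Borel probability measure ν on X, the iterates T^k(ν) converge weakly to μ as k → ∞. -/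
open MeasureTheory Filter

/-- The Markov operator of an iterated function system: `T(ν) = ∑ᵢ pᵢ·(fᵢ)_*ν`. -/
noncomputable def markovOp {X : Type*} [MeasurableSpace X]
    {N : ℕ} (f : Fin N → X → X) (p : Fin N → ℝ)
    (ν : Measure X) : Measure X :=
  ∑ i : Fin N, ENNReal.ofReal (p i) • ν.map (f i)

namespace BE

open scoped ENNReal Topology

lemma exists_q {N : ℕ} (s p : Fin N → ℝ) (hs : ∀ i, 0 < s i) (hpsum : ∑ i, p i = 1)
    (havg : ∑ i, p i * Real.log (s i) < 0) :
    ∃ q : ℝ, 0 < q ∧ q ≤ 1 ∧ ∑ i, p i * (s i) ^ q < 1 := by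
  have hd : HasDerivAt (fun q : ℝ => ∑ i, p i * (s i) ^ q) (∑ i, p i * Real.log (s i)) 0 := by
    have : ∀ i ∈ (Finset.univ : Finset (Fin N)),
        HasDerivAt (fun q : ℝ => p i * (s i) ^ q) (p i * Real.log (s i)) 0 := by
      intro i _
      have := (Real.hasStrictDerivAt_const_rpow (hs i) 0).hasDerivAt.const_mul (p i)
      simpa using this
    exact HasDerivAt.fun_sum this
  have h1 := (hasDerivAt_iff_tendsto_slope.1 hd).eventually (gt_mem_nhds havg)
  have h2 : ∀ᶠ q in 𝓝[>] (0:ℝ), slope (fun q : ℝ => ∑ i, p i * (s i) ^ q) 0 q < 0 :=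
    h1.filter_mono (nhdsWithin_mono _ (fun x hx => ne_of_gt hx))
  have h3 : ∀ᶠ q in 𝓝[>] (0:ℝ), q ∈ Set.Ioc (0:ℝ) 1 := Ioc_mem_nhdsGT one_pos
  obtain ⟨q, hq, hq0, hq1⟩ := (h2.and h3).exists
  refine ⟨q, hq0, hq1, ?_⟩
  rw [slope_def_field] at hq
  simp only [Real.rpow_zero, mul_one, hpsum, sub_zero] at hq
  have := (div_lt_iff₀ hq0).1 hq
  linarith

lemma lintegral_markovOp {Y : Type*} [MeasurableSpace Y] {N : ℕ} (f : Fin N → Y → Y)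
    (p : Fin N → ℝ) (hf : ∀ i, Measurable (f i)) (ν : Measure Y) (h : Y → ℝ≥0∞)
    (hh : Measurable h) :
    ∫⁻ y, h y ∂(markovOp f p ν) = ∑ i, ENNReal.ofReal (p i) * ∫⁻ y, h (f i y) ∂ν := by
  unfold markovOp
  rw [lintegral_finset_sum_measure]
  refine Finset.sum_congr rfl fun i _ => ?_
  rw [lintegral_smul_measure, lintegral_map hh (hf i), smul_eq_mul]

lemma integral_markovOp {Y : Type*} [MeasurableSpace Y] {N : ℕ} (f : Fin N → Y → Y)
    (p : Fin N → ℝ) (hp : ∀ i, 0 < p i)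
    (hf : ∀ i, Measurable (f i)) (ν : Measure Y) [IsFiniteMeasure ν] (h : Y → ℝ)
    (hh : Measurable h) (C : ℝ) (hC : ∀ y, |h y| ≤ C) :
    ∫ y, h y ∂(markovOp f p ν) = ∑ i, p i * ∫ y, h (f i y) ∂ν := by
  unfold markovOp
  rw [integral_finset_sum_measure]
  · refine Finset.sum_congr rfl fun i _ => ?_
    rw [integral_smul_measure, integral_map (hf i).aemeasurable hh.aestronglyMeasurable,
      smul_eq_mul, ENNReal.toReal_ofReal (hp i).le]
  · intro i _
    exact Integrable.smul_measure (Integrable.of_bound hh.aestronglyMeasurable C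
      (Eventually.of_forall hC)) ENNReal.ofReal_ne_top

lemma prob_markovOp {Y : Type*} [MeasurableSpace Y] {N : ℕ} (f : Fin N → Y → Y)
    (p : Fin N → ℝ) (hp : ∀ i, 0 < p i) (hpsum : ∑ i, p i = 1)
    (hf : ∀ i, Measurable (f i)) (ν : Measure Y) [IsProbabilityMeasure ν] :
    IsProbabilityMeasure (markovOp f p ν) := by
  constructor
  have := lintegral_markovOp f p hf ν (fun _ => 1) measurable_const
  simp only [lintegral_const, measure_univ, one_mul, mul_one] at this
  rw [this, ← ENNReal.ofReal_sum_of_nonneg (fun i _ => (hp i).le), hpsum, ENNReal.ofReal_one]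

/-- prepend a symbol -/
def cns {N : ℕ} (i : Fin N) (ω : ℕ → Fin N) : ℕ → Fin N := fun n => Nat.casesOn n i ω

@[simp] lemma cns_zero {N : ℕ} (i : Fin N) (ω : ℕ → Fin N) : cns i ω 0 = i := rfl
@[simp] lemma cns_succ {N : ℕ} (i : Fin N) (ω : ℕ → Fin N) (n : ℕ) : cns i ω (n+1) = ω n := rfl

lemma measurable_cns {N : ℕ} (i : Fin N) : Measurable (cns i) := by
  refine measurable_pi_lambda _ fun n => ?_
  cases n with
  | zero => simp
  | succ n => simpa using measurable_pi_apply n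

lemma exists_bernoulli {N : ℕ} (p : Fin N → ℝ) (hp : ∀ i, 0 < p i) (hpsum : ∑ i, p i = 1) :
    ∃ P : Measure (ℕ → Fin N), IsProbabilityMeasure P ∧ markovOp cns p P = P := by
  classical
  let m : Measure (Fin N) := ∑ i, ENNReal.ofReal (p i) • Measure.dirac i
  have hm : ∀ t, m t = ∑ i, ENNReal.ofReal (p i) * (if i ∈ t then 1 else 0) := by
    intro t
    simp [m, Measure.finset_sum_apply, Set.indicator_apply]
  have hsum1 : ∑ i, ENNReal.ofReal (p i) = 1 := by
    rw [← ENNReal.ofReal_sum_of_nonneg (fun i _ => (hp i).le), hpsum, ENNReal.ofReal_one]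
  haveI : IsProbabilityMeasure m := ⟨by rw [hm]; simp [hsum1]⟩
  refine ⟨Measure.infinitePi (fun _ : ℕ => m), inferInstance, ?_⟩
  apply Measure.eq_infinitePi
  intro S t ht
  let S' : Finset ℕ := S.preimage Nat.succ Nat.succ_injective.injOn
  have hpre : ∀ i, (cns i) ⁻¹' (Set.pi S t) =
      if (0 ∈ S → i ∈ t 0) then Set.pi S' (fun n => t (n+1)) else ∅ := by
    intro i
    ext ω
    split_ifs with h
    · simp only [Set.mem_preimage, Set.mem_pi, SetLike.mem_coe, S', Finset.mem_preimage]
      constructor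
      · intro H n hn
        exact H (n+1) hn
      · intro H n hn
        cases n with
        | zero => exact h hn
        | succ n => exact H n hn
    · simp only [Set.mem_preimage, Set.mem_pi, SetLike.mem_coe, Set.mem_empty_iff_false, iff_false]
      intro H
      exact h (fun h0 => H 0 h0)
  have hbox : MeasurableSet (Set.pi (S : Set ℕ) t) :=
    MeasurableSet.pi S.countable_toSet (fun i _ => ht i)
  have hL : markovOp cns p (Measure.infinitePi (fun _ : ℕ => m)) (Set.pi S t) =
      ∑ i, ENNReal.ofReal (p i) *
        ((if (0 ∈ S → i ∈ t 0) then 1 else 0) * ∏ n ∈ S', m (t (n+1))) := by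
    unfold markovOp
    rw [Measure.finset_sum_apply]
    refine Finset.sum_congr rfl fun i _ => ?_
    rw [Measure.smul_apply, Measure.map_apply (measurable_cns i) hbox, hpre, smul_eq_mul]
    congr 1
    split_ifs
    · rw [Measure.infinitePi_pi _ (fun n _ => ht (n+1)), one_mul]
    · simp
  rw [hL]
  simp_rw [← mul_assoc]
  rw [← Finset.sum_mul]
  have hS' : ∏ n ∈ S', m (t (n+1)) = ∏ n ∈ S.erase 0, m (t n) := by
    refine Finset.prod_bij (fun n _ => n + 1) ?_ ?_ ?_ ?_
    · intro a ha
      simpa [S'] using ha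
    · intro a _ b _ h
      omega
    · intro b hb
      cases b with
      | zero => simp at hb
      | succ b => exact ⟨b, by simpa [S'] using hb, rfl⟩
    · intros; rfl
  rw [hS']
  by_cases h0 : 0 ∈ S
  · rw [← Finset.mul_prod_erase S _ h0, hm (t 0)]
    simp [h0]
  · rw [Finset.erase_eq_of_notMem h0]
    simp [h0, hsum1]

section main

variable {X : Type*}

/-- backward iteration -/
def Z {N : ℕ} (f : Fin N → X → X) (x : X) : ℕ → (ℕ → Fin N) → X
  | 0, _ => x
  | n+1, ω => f (ω 0) (Z f x n (fun k => ω (k+1)))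

lemma Z_cns {N : ℕ} (f : Fin N → X → X) (x : X) (n : ℕ) (i : Fin N) (ω : ℕ → Fin N) :
    Z f x (n+1) (cns i ω) = f i (Z f x n ω) := rfl

lemma measurable_Z [MeasurableSpace X] {N : ℕ} (f : Fin N → X → X)
    (hf : ∀ i, Measurable (f i)) (n : ℕ) :
    Measurable (fun z : X × (ℕ → Fin N) => Z f z.1 n z.2) := by
  induction n with
  | zero => exact measurable_fst
  | succ n ih =>
    have h1 : Measurable (fun z : X × Fin N => f z.2 z.1) :=
      measurable_from_prod_countable_left hf
    have h2 : Measurable (fun z : X × (ℕ → Fin N) => (z.1, fun k => z.2 (k+1))) := by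
      fun_prop
    have h3 : Measurable (fun z : X × (ℕ → Fin N) => z.2 0) := by fun_prop
    exact h1.comp ((ih.comp h2).prodMk h3)

lemma tsum_ne_top {q : ℝ} (hq0 : 0 < q) (hq1 : q ≤ 1) (a : ℕ → ℝ≥0∞)
    (h : ∑' n, (a n) ^ q ≠ ∞) : ∑' n, a n ≠ ∞ := by
  set S := ∑' n, (a n) ^ q with hS
  have hle : ∀ n, a n ≤ (a n) ^ q * S ^ ((1 - q) / q) := by
    intro n
    have h1 : a n = (a n) ^ q * ((a n)^q) ^ ((1 - q)/q) := by
      rw [← ENNReal.rpow_mul, mul_div_cancel₀ _ hq0.ne', ← ENNReal.rpow_add_of_nonneg _ _ hq0.le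
        (by linarith)]
      simp
    calc a n = (a n) ^ q * ((a n)^q) ^ ((1 - q)/q) := h1
      _ ≤ _ := by
        refine mul_le_mul_right ?_ _
        exact ENNReal.rpow_le_rpow (ENNReal.le_tsum n) (div_nonneg (by linarith) hq0.le)
  refine ne_top_of_le_ne_top ?_ (ENNReal.tsum_le_tsum hle)
  rw [ENNReal.tsum_mul_right]
  exact ENNReal.mul_ne_top h
    (ENNReal.rpow_ne_top_of_nonneg (div_nonneg (by linarith) hq0.le) h)

lemma ae_summable {N : ℕ} (s p : Fin N → ℝ) (hs : ∀ i, 0 < s i) (hp : ∀ i, 0 < p i)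
    {q : ℝ} (hq0 : 0 < q) (hq1 : q ≤ 1) (hq : ∑ i, p i * (s i) ^ q < 1)
    (P : Measure (ℕ → Fin N)) [IsProbabilityMeasure P] (hP : markovOp cns p P = P)
    (a : ℕ → (ℕ → Fin N) → ℝ≥0∞) (ha : ∀ n, Measurable (a n)) (C : ℝ≥0∞) (hC : C ≠ ∞)
    (h0 : ∀ ω, a 0 ω ≤ C)
    (hstep : ∀ n i ω, a (n+1) (cns i ω) ≤ ENNReal.ofReal (s i) * a n ω) :
    ∀ᵐ ω ∂P, ∑' n, a n ω ≠ ∞ := by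
  set r : ℝ≥0∞ := ENNReal.ofReal (∑ i, p i * (s i) ^ q) with hr
  have hr1 : r < 1 := by
    rw [hr]; exact ENNReal.ofReal_lt_one.2 hq
  have hr' : r = ∑ i, ENNReal.ofReal (p i) * ENNReal.ofReal (s i) ^ q := by
    rw [hr, ENNReal.ofReal_sum_of_nonneg
      (fun i _ => mul_nonneg (hp i).le (Real.rpow_nonneg (hs i).le _))]
    refine Finset.sum_congr rfl fun i _ => ?_
    rw [ENNReal.ofReal_mul (hp i).le, ENNReal.ofReal_rpow_of_pos (hs i)]
  have hb : ∀ n, ∫⁻ ω, (a n ω) ^ q ∂P ≤ C ^ q * r ^ n := by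
    intro n
    induction n with
    | zero =>
      calc ∫⁻ ω, (a 0 ω) ^ q ∂P ≤ ∫⁻ ω, C ^ q ∂P :=
            lintegral_mono fun ω => ENNReal.rpow_le_rpow (h0 ω) hq0.le
        _ = _ := by simp
    | succ n ih =>
      conv_lhs => rw [← hP]
      rw [lintegral_markovOp cns p measurable_cns P _ ((ha (n+1)).pow_const q)]
      calc ∑ i, ENNReal.ofReal (p i) * ∫⁻ ω, (a (n+1) (cns i ω)) ^ q ∂P
          ≤ ∑ i, ENNReal.ofReal (p i) * (ENNReal.ofReal (s i) ^ q * (C ^ q * r ^ n)) := by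
            gcongr with i _
            calc ∫⁻ ω, (a (n+1) (cns i ω)) ^ q ∂P
                ≤ ∫⁻ ω, ENNReal.ofReal (s i) ^ q * (a n ω) ^ q ∂P := by
                  refine lintegral_mono fun ω => ?_
                  rw [← ENNReal.mul_rpow_of_nonneg _ _ hq0.le]
                  exact ENNReal.rpow_le_rpow (hstep n i ω) hq0.le
              _ = ENNReal.ofReal (s i) ^ q * ∫⁻ ω, (a n ω) ^ q ∂P :=
                  lintegral_const_mul _ ((ha n).pow_const q)
              _ ≤ _ := by gcongr
        _ = C ^ q * r ^ (n+1) := by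
            simp_rw [← mul_assoc]
            rw [← Finset.sum_mul, ← Finset.sum_mul, ← hr', pow_succ]
            ring
  have hfin : ∫⁻ ω, ∑' n, (a n ω) ^ q ∂P ≠ ∞ := by
    rw [lintegral_tsum (fun n => ((ha n).pow_const q).aemeasurable)]
    refine ne_top_of_le_ne_top ?_ (ENNReal.tsum_le_tsum hb)
    rw [ENNReal.tsum_mul_left, ENNReal.tsum_geometric]
    refine ENNReal.mul_ne_top (ENNReal.rpow_ne_top_of_nonneg hq0.le hC) ?_
    rw [ENNReal.inv_ne_top]
    exact (tsub_pos_of_lt hr1).ne'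
  filter_upwards [ae_lt_top (Measurable.ennreal_tsum fun n => (ha n).pow_const q) hfin] with ω hω
  exact tsum_ne_top hq0 hq1 _ hω.ne

variable [MetricSpace X] [MeasurableSpace X] [BorelSpace X]

lemma integral_iterate {N : ℕ} (f : Fin N → X → X) (p : Fin N → ℝ)
    (hp : ∀ i, 0 < p i) (hpsum : ∑ i, p i = 1) (hf : ∀ i, Measurable (f i))
    (P : Measure (ℕ → Fin N)) [IsProbabilityMeasure P] (hP : markovOp cns p P = P)
    (ν : Measure X) [IsProbabilityMeasure ν] (C : ℝ) (k : ℕ) :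
    ∀ φ : X → ℝ, Measurable φ → (∀ x, |φ x| ≤ C) →
    ∫ x, φ x ∂((markovOp f p)^[k] ν) = ∫ x, ∫ ω, φ (Z f x k ω) ∂P ∂ν := by
  have hprob : ∀ k, IsProbabilityMeasure ((markovOp f p)^[k] ν) := by
    intro k
    induction k with
    | zero => simpa
    | succ k ih =>
      rw [Function.iterate_succ_apply']
      exact prob_markovOp f p hp hpsum hf _
  induction k with
  | zero => intro φ _ _; simp [Z]
  | succ k ih =>
    intro φ hφ hC
    haveI := hprob k
    rw [Function.iterate_succ_apply', integral_markovOp f p hp hf _ φ hφ C hC]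
    have h1 : ∀ i, ∫ y, φ (f i y) ∂((markovOp f p)^[k] ν)
        = ∫ x, ∫ ω, φ (f i (Z f x k ω)) ∂P ∂ν := fun i =>
      ih (fun y => φ (f i y)) (hφ.comp (hf i)) (fun x => hC _)
    simp_rw [h1, ← integral_const_mul]
    rw [← integral_finset_sum]
    · refine integral_congr_ae (Eventually.of_forall fun x => ?_)
      have hm : Measurable fun ω => φ (Z f x (k+1) ω) :=
        hφ.comp ((measurable_Z f hf (k+1)).comp measurable_prodMk_left)
      have := integral_markovOp cns p hp measurable_cns P _ hm C (fun _ => hC _)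
      rw [hP] at this
      simp only [integral_const_mul]
      rw [this]
      rfl
    · intro i _
      have hm : Measurable fun z : X × (ℕ → Fin N) => p i * φ (f i (Z f z.1 k z.2)) :=
        (hφ.comp ((hf i).comp (measurable_Z f hf k))).const_mul _
      have hI : Integrable (fun z : X × (ℕ → Fin N) => p i * φ (f i (Z f z.1 k z.2)))
          (ν.prod P) := by
        refine Integrable.of_bound hm.aestronglyMeasurable (p i * C)
          (Eventually.of_forall fun z => ?_)
        rw [Real.norm_eq_abs, abs_mul, abs_of_pos (hp i)]
        exact mul_le_mul_of_nonneg_left (hC _) (hp i).le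
      exact hI.integral_prod_left

end main

end BE

/-- **Barnsley–Elton.** On a (nonempty) complete separable
metric space, an IFS of Lipschitz maps `fᵢ` with constants `sᵢ > 0` and
probabilities `pᵢ > 0`, `∑ pᵢ = 1`, satisfying the average contractivity
condition `∑ᵢ pᵢ·log sᵢ < 0`, has a unique invariant Borel probability
measure, and this measure is attractive: the iterates of the Markov operator
applied to any Borel probability measure converge weakly to it. -/
theorem barnsley_elton
    {X : Type*} [MetricSpace X] [CompleteSpace X]
    [TopologicalSpace.SeparableSpace X] [Nonempty X]
    [MeasurableSpace X] [BorelSpace X]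
    {N : ℕ} (f : Fin N → X → X) (s : Fin N → ℝ) (p : Fin N → ℝ)
    (hs : ∀ i, 0 < s i)
    (hlip : ∀ i, ∀ x y : X, dist (f i x) (f i y) ≤ s i * dist x y)
    (hp : ∀ i, 0 < p i) (hpsum : ∑ i : Fin N, p i = 1)
    (havg : ∑ i : Fin N, p i * Real.log (s i) < 0) :
    ∃ μ : Measure X, IsProbabilityMeasure μ ∧ markovOp f p μ = μ ∧
      (∀ μ' : Measure X, IsProbabilityMeasure μ' → markovOp f p μ' = μ' → μ' = μ) ∧
      (∀ ν : Measure X, IsProbabilityMeasure ν →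
        ∀ φ : BoundedContinuousFunction X ℝ,
          Tendsto (fun k : ℕ => ∫ x, φ x ∂((markovOp f p)^[k] ν)) atTop
            (nhds (∫ x, φ x ∂μ))) := by
  haveI : SecondCountableTopology X := UniformSpace.secondCountable_of_separable X
  obtain ⟨q, hq0, hq1, hq⟩ := BE.exists_q s p hs hpsum havg
  obtain ⟨P, hPp, hP⟩ := BE.exists_bernoulli p hp hpsum
  have hcont : ∀ i, Continuous (f i) := fun i =>
    (LipschitzWith.of_dist_le_mul (K := ⟨s i, (hs i).le⟩) (hlip i)).continuous
  have hf : ∀ i, Measurable (f i) := fun i => (hcont i).measurable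
  have helip : ∀ i x y, edist (f i x) (f i y) ≤ ENNReal.ofReal (s i) * edist x y := by
    intro i x y
    rw [edist_dist, edist_dist, ← ENNReal.ofReal_mul (hs i).le]
    exact ENNReal.ofReal_le_ofReal (hlip i x y)
  have hZm : ∀ x n, Measurable (BE.Z f x n) := fun x n =>
    (BE.measurable_Z f hf n).comp measurable_prodMk_left
  let x0 : X := Classical.arbitrary X
  have hcau : ∀ᵐ ω ∂P, ∑' n, edist (BE.Z f x0 n ω) (BE.Z f x0 (n+1) ω) ≠ ⊤ := by
    refine BE.ae_summable s p hs hp hq0 hq1 hq P hP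
      (fun n ω => edist (BE.Z f x0 n ω) (BE.Z f x0 (n+1) ω))
      (fun n => (hZm x0 n).edist (hZm x0 (n+1))) (∑ i, edist x0 (f i x0)) ?_ ?_ ?_
    · exact ENNReal.sum_ne_top.2 fun i _ => edist_ne_top _ _
    · intro ω
      exact Finset.single_le_sum (f := fun i => edist x0 (f i x0)) (fun _ _ => zero_le)
        (Finset.mem_univ (ω 0))
    · intro n i ω
      exact helip i _ _
  obtain ⟨W, hWm, hW⟩ := measurable_limit_of_tendsto_metrizable_ae (μ := P) (L := atTop)
    (f := fun n => BE.Z f x0 n) (fun n => (hZm x0 n).aemeasurable) (by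
      filter_upwards [hcau] with ω hω
      exact cauchySeq_tendsto_of_complete
        (cauchySeq_of_edist_le_of_tsum_ne_top _ (fun n => le_rfl) hω))
  have hWx : ∀ x, ∀ᵐ ω ∂P, Tendsto (fun n => BE.Z f x n ω) atTop (nhds (W ω)) := by
    intro x
    have h1 : ∀ᵐ ω ∂P, ∑' n, edist (BE.Z f x n ω) (BE.Z f x0 n ω) ≠ ⊤ := by
      refine BE.ae_summable s p hs hp hq0 hq1 hq P hP
        (fun n ω => edist (BE.Z f x n ω) (BE.Z f x0 n ω))
        (fun n => (hZm x n).edist (hZm x0 n)) (edist x x0) (edist_ne_top _ _) ?_ ?_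
      · intro ω
        exact le_rfl
      · intro n i ω
        exact helip i _ _
    filter_upwards [h1, hW] with ω h1 h2
    have h3 := ENNReal.tendsto_atTop_zero_of_tsum_ne_top h1
    rw [tendsto_iff_edist_tendsto_0] at h2 ⊢
    have h4 := h3.add h2
    rw [add_zero] at h4
    exact tendsto_of_tendsto_of_tendsto_of_le_of_le tendsto_const_nhds h4
      (fun _ => zero_le) (fun n => edist_triangle _ _ _)
  have hμp : IsProbabilityMeasure (P.map W) := Measure.isProbabilityMeasure_map hWm.aemeasurable
  have hcW : ∀ i, ∀ᵐ ω ∂P, W (BE.cns i ω) = f i (W ω) := by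
    intro i
    have hac : P.map (BE.cns i) ≪ P := by
      intro A hA
      rw [← hP] at hA
      unfold markovOp at hA
      rw [Measure.finset_sum_apply, Finset.sum_eq_zero_iff] at hA
      have := hA i (Finset.mem_univ i)
      rw [Measure.smul_apply, smul_eq_mul, mul_eq_zero] at this
      rcases this with h | h
      · exact absurd h (ENNReal.ofReal_pos.2 (hp i)).ne'
      · exact h
    have h1 := ae_of_ae_map (BE.measurable_cns i).aemeasurable (hac.ae_le hW)
    filter_upwards [h1, hW] with ω h1 h2
    have h3 := h1.comp (tendsto_add_atTop_nat 1)
    exact tendsto_nhds_unique h3 (((hcont i).tendsto _).comp h2)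
  have hinv : markovOp f p (P.map W) = P.map W := by
    ext A hA
    have e1 : ∀ ν : Measure X, ν A = ∫⁻ x, A.indicator 1 x ∂ν := fun ν =>
      (lintegral_indicator_one hA).symm
    have hAm : Measurable (A.indicator (1 : X → ENNReal)) := measurable_one.indicator hA
    rw [e1, e1, BE.lintegral_markovOp f p hf _ _ hAm, lintegral_map hAm hWm]
    conv_rhs => rw [← hP]
    rw [BE.lintegral_markovOp BE.cns p BE.measurable_cns P (fun ω => A.indicator 1 (W ω)) (hAm.comp hWm)]
    refine Finset.sum_congr rfl fun i _ => ?_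
    rw [lintegral_map (f := fun y => A.indicator (1 : X → ENNReal) (f i y)) (hAm.comp (hf i)) hWm]
    congr 1
    refine lintegral_congr_ae ?_
    filter_upwards [hcW i] with ω h
    rw [h]
  have hattr : ∀ ν : Measure X, IsProbabilityMeasure ν →
        ∀ φ : BoundedContinuousFunction X ℝ,
          Tendsto (fun k : ℕ => ∫ x, φ x ∂((markovOp f p)^[k] ν)) atTop
            (nhds (∫ x, φ x ∂(P.map W))) := by
    intro ν hν φ
    have hφm : Measurable φ := φ.continuous.measurable
    have hφb : ∀ x, |φ x| ≤ ‖φ‖ := fun x => φ.norm_coe_le_norm x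
    have h1 : ∀ k, ∫ x, φ x ∂((markovOp f p)^[k] ν) = ∫ x, ∫ ω, φ (BE.Z f x k ω) ∂P ∂ν :=
      fun k => BE.integral_iterate f p hp hpsum hf P hP ν ‖φ‖ k φ hφm hφb
    simp_rw [h1]
    rw [integral_map hWm.aemeasurable hφm.aestronglyMeasurable]
    have h2 : ∫ ω, φ (W ω) ∂P = ∫ x : X, (∫ ω, φ (W ω) ∂P) ∂ν := by simp
    rw [h2]
    refine tendsto_integral_of_dominated_convergence (fun _ => ‖φ‖) ?_ (integrable_const _) ?_ ?_
    · intro k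
      have : StronglyMeasurable (fun z : X × (ℕ → Fin N) => φ (BE.Z f z.1 k z.2)) :=
        (hφm.comp (BE.measurable_Z f hf k)).stronglyMeasurable
      exact this.integral_prod_right.aestronglyMeasurable
    · intro k
      refine Eventually.of_forall fun x => ?_
      have := norm_integral_le_of_norm_le_const (μ := P) (f := fun ω => φ (BE.Z f x k ω))
        (C := ‖φ‖) (Eventually.of_forall fun ω => hφb _)
      simpa using this
    · refine Eventually.of_forall fun x => ?_
      refine tendsto_integral_of_dominated_convergence (fun _ => ‖φ‖) ?_ (integrable_const _) ?_ ?_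
      · intro k
        exact (hφm.comp (hZm x k)).aestronglyMeasurable
      · intro k
        exact Eventually.of_forall fun ω => hφb _
      · filter_upwards [hWx x] with ω h
        exact (φ.continuous.tendsto _).comp h
  refine ⟨P.map W, hμp, hinv, ?_, hattr⟩
  intro μ' hμ' hinv'
  refine ext_of_forall_integral_eq_of_IsFiniteMeasure fun φ => ?_
  have h1 := hattr μ' hμ' φ
  have h2 : ∀ k, (markovOp f p)^[k] μ' = μ' := fun k => Function.iterate_fixed hinv' k
  simp_rw [h2] at h1
  exact tendsto_nhds_unique tendsto_const_nhds h1
end
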